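/- Let (X, 𝒜, μ) be a measure space, p ∈ (1, ∞), and let Σ be a family of measures on (X, 𝒜) with Mod_p(Σ) < ∞. Then the infimum defining Mod_p(Σ) over p-weakly admissible functions is attained: there exists a measurable f : X → [0, ∞] with ∫_X f^p dμ = Mod_p(Σ) and such that ∫_X f dν ≥ 1 for p-a.e. ν ∈ Σ; moreover, any two such norm-minimizing p-weakly admissible functions agree μ-almost everywhere. -/

import Mathlib

/-!
The proof replaces reflexivity of `L^p` and Mazur's lemma by a quantitative strict convexity
estimate. By homogeneity and compactness of `[0, 1]`, for each `δ > 0` there is `C` with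
`(a - b)₊ ^ p ≤ δ (a ^ p + b ^ p) + C ((a ^ p + b ^ p) / 2 - ((a + b) / 2) ^ p)`
for `a, b ≥ 0` (`exists_convexity_bound`). The midpoint of two weakly admissible functions has
`p`-energy at least `Mod_p` (`pModulus_le_midpoint`), so two almost minimizing functions `f, g`
satisfy `∫ (f - g)₊ ^ p ≤ ε` (`exists_almost_minimizer_close`). Applied to two minimizers this is
uniqueness.

For existence, take a minimizing sequence `f k` of admissible functions along which
`∫ (f k - f (k + 1))₊ ^ p` decays so fast that `2 ^ k (f k - f (k + 1))₊ ≤ H` for one function `H`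
of finite `p`-energy. With `F = liminf f k`, telescoping gives `f k ≤ F + 2 (1 / 2) ^ k H`
everywhere. Hence `∫ F dν ≥ 1` for every `ν ∈ S` with `∫ H dν < ∞`, and the remaining `ν` form an
exceptional family. Fatou's lemma gives `∫ F ^ p ≤ Mod_p`. All differences are truncated
differences in `[0, ∞]`, so infinite values need no separate treatment.
-/

open MeasureTheory ENNReal

/-- The `p`-modulus of a family `S` of measures on a measurable space `X`, with respect to a
base measure `μ`: the infimum of `∫ f^p dμ` over all measurable `f : X → [0,∞]` that are
admissible for `S`, i.e. `∫ f dν ≥ 1` for every `ν ∈ S`. -/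
noncomputable def pModulus {X : Type*} [MeasurableSpace X] (p : ℝ) (μ : MeasureTheory.Measure X)
    (S : Set (MeasureTheory.Measure X)) : ℝ≥0∞ :=
  ⨅ (f : X → ℝ≥0∞) (_ : Measurable f ∧ ∀ ν ∈ S, 1 ≤ ∫⁻ x, f x ∂ν),
    ∫⁻ x, f x ^ p ∂μ

open Filter Topology NNReal

/-- The normalized case `a = 1`, `b = t` of the convexity estimate. -/
lemma exists_convexity_bound_unit {p : ℝ} (hp : 1 < p) {δ : ℝ} (hδ : 0 < δ) :
    ∃ C : ℝ, 0 ≤ C ∧ ∀ t : ℝ, 0 ≤ t → t ≤ 1 →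
      (1 - t) ^ p + C * ((1 + t) / 2) ^ p ≤ δ * (1 + t ^ p) + C * ((1 + t ^ p) / 2) := by
  have hp0 : 0 < p := by linarith
  have hD0 : ∀ t : ℝ, 0 ≤ t → ((1 + t) / 2) ^ p ≤ (1 + t ^ p) / 2 := by
    intro t ht
    have h := (convexOn_rpow hp.le).2 (show (1 : ℝ) ∈ Set.Ici 0 by simp)
      (show t ∈ Set.Ici 0 from ht)
      (show (0 : ℝ) ≤ 1/2 by norm_num) (show (0 : ℝ) ≤ 1/2 by norm_num) (by norm_num)
    simp only [smul_eq_mul, Real.one_rpow] at h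
    have e : (1 / 2 * 1 + 1 / 2 * t : ℝ) = (1 + t) / 2 := by ring
    rw [e] at h
    linarith
  have hD1 : ∀ t : ℝ, 0 ≤ t → t ≠ 1 → 0 < (1 + t ^ p) / 2 - ((1 + t) / 2) ^ p := by
    intro t ht ht1
    have h := (strictConvexOn_rpow hp).2 (show (1 : ℝ) ∈ Set.Ici 0 by simp)
      (show t ∈ Set.Ici 0 from ht)
      ht1.symm (show (0 : ℝ) < 1/2 by norm_num) (show (0 : ℝ) < 1/2 by norm_num) (by norm_num)
    simp only [smul_eq_mul, Real.one_rpow] at h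
    have e : (1 / 2 * 1 + 1 / 2 * t : ℝ) = (1 + t) / 2 := by ring
    rw [e] at h
    linarith
  have hc1 : Continuous fun t : ℝ => (1 - t) ^ p :=
    (continuous_const.sub continuous_id).rpow_const fun _ => Or.inr hp0.le
  have hc2 : Continuous fun t : ℝ => (1 + t ^ p) / 2 - ((1 + t) / 2) ^ p := by
    have h1 : Continuous fun t : ℝ => t ^ p :=
      continuous_id.rpow_const fun _ => Or.inr hp0.le
    have h2 : Continuous fun t : ℝ => ((1 + t) / 2) ^ p :=
      Continuous.rpow_const (by fun_prop) fun _ => Or.inr hp0.le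
    exact ((continuous_const.add h1).div_const 2).sub h2
  -- Outside `K` the `δ` term alone suffices; on `K` the convexity gap is bounded below.
  let K : Set ℝ := Set.Icc 0 1 ∩ {t | δ ≤ (1 - t) ^ p}
  have hK : IsCompact K := isCompact_Icc.inter_right (isClosed_le continuous_const hc1)
  obtain ⟨c, hc, hcK⟩ : ∃ c : ℝ, 0 < c ∧
      ∀ t ∈ K, c ≤ (1 + t ^ p) / 2 - ((1 + t) / 2) ^ p := by
    rcases K.eq_empty_or_nonempty with h | h
    · exact ⟨1, one_pos, by simp [h]⟩
    · obtain ⟨t, htK, ht⟩ := hK.exists_isMinOn h hc2.continuousOn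
      refine ⟨_, hD1 t htK.1.1 ?_, fun s hs => ht hs⟩
      rintro rfl
      have := htK.2
      simp [Real.zero_rpow hp0.ne'] at this
      linarith
  refine ⟨1 / c, by positivity, fun t h0 h1 => ?_⟩
  have htp : 0 ≤ t ^ p := Real.rpow_nonneg h0 p
  by_cases hδt : δ ≤ (1 - t) ^ p
  · have h2 := hcK t ⟨⟨h0, h1⟩, hδt⟩
    have h3 : (1 - t) ^ p ≤ 1 := Real.rpow_le_one (by linarith) (by linarith) hp0.le
    have h4 : 1 ≤ 1 / c * ((1 + t ^ p) / 2 - ((1 + t) / 2) ^ p) := by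
      rw [one_div, inv_mul_eq_div, le_div_iff₀ hc]; linarith
    have h5 : 0 ≤ δ * (1 + t ^ p) := by positivity
    linarith
  · push Not at hδt
    have h2 := mul_le_mul_of_nonneg_left (hD0 t h0) (show 0 ≤ 1 / c by positivity)
    have h3 : 0 ≤ δ * t ^ p := by positivity
    linarith

/-- Quantitative strict convexity of `a ↦ a ^ p` on `[0, ∞]`, written without subtracting the
convexity gap. The difference `a - b` is truncated. -/
lemma exists_convexity_bound {p : ℝ} (hp : 1 < p) {δ : ℝ≥0} (hδ : 0 < δ) :
    ∃ C : ℝ≥0, ∀ a b : ℝ≥0∞,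
      (a - b) ^ p + C * ((a + b) / 2) ^ p ≤ δ * (a ^ p + b ^ p) + C * ((a ^ p + b ^ p) / 2) := by
  have hp0 : 0 < p := by linarith
  obtain ⟨C, hC, h⟩ := exists_convexity_bound_unit hp (δ := δ) (by exact_mod_cast hδ)
  lift C to ℝ≥0 using hC
  refine ⟨C, fun a b => ?_⟩
  have hδ' : (δ : ℝ≥0∞) ≠ 0 := by exact_mod_cast hδ.ne'
  rcases eq_or_ne a ⊤ with rfl | ha
  · simp [ENNReal.top_rpow_of_pos hp0, hδ', ENNReal.mul_top]
  rcases eq_or_ne b ⊤ with rfl | hb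
  · simp [ENNReal.top_rpow_of_pos hp0, hδ', ENNReal.mul_top]
  lift a to ℝ≥0 using ha
  lift b to ℝ≥0 using hb
  have h2 : (2 : ℝ≥0∞) = ((2 : ℝ≥0) : ℝ≥0∞) := rfl
  have h20 : (2 : ℝ≥0) ≠ 0 := two_ne_zero
  simp only [h2, ← ENNReal.coe_sub, ← ENNReal.coe_add, ← ENNReal.coe_div h20,
    ← ENNReal.coe_rpow_of_nonneg _ hp0.le, ← ENNReal.coe_mul, ENNReal.coe_le_coe]
  rw [← NNReal.coe_le_coe]
  rcases le_or_gt a b with hab | hab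
  · rw [tsub_eq_zero_of_le hab, NNReal.zero_rpow hp0.ne', zero_add]
    push_cast
    have hcv := (convexOn_rpow hp.le).2 (show (a : ℝ) ∈ Set.Ici 0 from a.coe_nonneg)
      (show (b : ℝ) ∈ Set.Ici 0 from b.coe_nonneg)
      (show (0 : ℝ) ≤ 1/2 by norm_num) (show (0 : ℝ) ≤ 1/2 by norm_num) (by norm_num)
    simp only [smul_eq_mul] at hcv
    have hcv' : (((a : ℝ) + b) / 2) ^ p ≤ ((a : ℝ) ^ p + (b : ℝ) ^ p) / 2 := by
      have e : (1 / 2 * a + 1 / 2 * b : ℝ) = (a + b) / 2 := by ring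
      rw [e] at hcv
      linarith
    have h3 := mul_le_mul_of_nonneg_left hcv' C.coe_nonneg
    have h4 : 0 ≤ (δ : ℝ) * ((a : ℝ) ^ p + (b : ℝ) ^ p) := by positivity
    linarith
  · push_cast [NNReal.coe_sub hab.le]
    have ha0 : (0 : ℝ) < a := by exact_mod_cast (zero_le).trans_lt hab
    have hab' : (b : ℝ) ≤ a := by exact_mod_cast hab.le
    have ht0 : (0 : ℝ) ≤ b / a := by positivity
    have ht1 : (b : ℝ) / a ≤ 1 := by rw [div_le_one ha0]; exact hab'
    have h3 := mul_le_mul_of_nonneg_left (h _ ht0 ht1) (Real.rpow_nonneg ha0.le p)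
    have e1 : (a - b : ℝ) ^ p = (a : ℝ) ^ p * (1 - b / a : ℝ) ^ p := by
      rw [← Real.mul_rpow ha0.le (by linarith)]; congr 1; field_simp
    have e2 : ((a + b : ℝ) / 2) ^ p = (a : ℝ) ^ p * ((1 + b / a : ℝ) / 2) ^ p := by
      rw [← Real.mul_rpow ha0.le (by positivity)]; congr 1; field_simp
    have e3 : (b : ℝ) ^ p = (a : ℝ) ^ p * (b / a : ℝ) ^ p := by
      rw [← Real.mul_rpow ha0.le ht0]; congr 1; field_simp
    rw [e1, e2, e3]
    linarith

section

variable {X : Type*} [MeasurableSpace X] {p : ℝ} {μ : Measure X} {S : Set (Measure X)}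

lemma pModulus_le {f : X → ℝ≥0∞} (hf : Measurable f) (h : ∀ ν ∈ S, 1 ≤ ∫⁻ x, f x ∂ν) :
    pModulus p μ S ≤ ∫⁻ x, f x ^ p ∂μ :=
  iInf₂_le f ⟨hf, h⟩

lemma exists_admissible_lt {c : ℝ≥0∞} (h : pModulus p μ S < c) :
    ∃ f : X → ℝ≥0∞, Measurable f ∧ (∀ ν ∈ S, 1 ≤ ∫⁻ x, f x ∂ν) ∧ ∫⁻ x, f x ^ p ∂μ < c := by
  simp only [pModulus, iInf_lt_iff] at h
  obtain ⟨f, ⟨h1, h2⟩, h3⟩ := h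
  exact ⟨f, h1, h2, h3⟩

lemma pModulus_empty (hp : 1 < p) : pModulus p μ (∅ : Set (Measure X)) = 0 := by
  refine le_antisymm ((pModulus_le (f := fun _ => 0) measurable_const (by simp)).trans ?_)
    (zero_le)
  simp [ENNReal.zero_rpow_of_pos (show 0 < p by linarith)]

/-- A family on which a single function of finite `p`-energy has infinite integrals is
exceptional, since all positive multiples of that function are admissible. -/
lemma pModulus_eq_zero_of_lintegral_eq_top (hp : 1 < p) {H : X → ℝ≥0∞} (hH : Measurable H)
    (hfin : ∫⁻ x, H x ^ p ∂μ ≠ ⊤) (h : ∀ ν ∈ S, ∫⁻ x, H x ∂ν = ⊤) : pModulus p μ S = 0 := by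
  have hp0 : 0 < p := by linarith
  have key : ∀ n : ℕ, pModulus p μ S ≤ (((n : ℝ≥0∞)⁻¹) ^ p) * ∫⁻ x, H x ^ p ∂μ := by
    intro n
    have hn : ((n : ℝ≥0∞)⁻¹) ≠ 0 := by simp
    refine (pModulus_le (f := fun x => (n : ℝ≥0∞)⁻¹ * H x) (hH.const_mul _) ?_).trans ?_
    · intro ν hν
      rw [lintegral_const_mul _ hH, h ν hν, ENNReal.mul_top hn]
      exact le_top
    · simp only [ENNReal.mul_rpow_of_nonneg _ _ hp0.le]
      rw [lintegral_const_mul _ (hH.pow_const p)]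
  have hlim : Tendsto (fun n : ℕ => (((n : ℝ≥0∞)⁻¹) ^ p) * ∫⁻ x, H x ^ p ∂μ) atTop (𝓝 0) := by
    have h1 : Tendsto (fun n : ℕ => ((n : ℝ≥0∞)⁻¹) ^ p) atTop (𝓝 0) := by
      have := (ENNReal.continuous_rpow_const (y := p)).tendsto 0 |>.comp
        ENNReal.tendsto_inv_nat_nhds_zero
      simpa [ENNReal.zero_rpow_of_pos hp0, Function.comp_def] using this
    simpa using ENNReal.Tendsto.mul_const h1 (Or.inr hfin)
  exact le_antisymm (ge_of_tendsto' hlim key) (zero_le)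

/-- Adding small admissible functions for the two exceptional families makes the midpoint
admissible for all of `S`; Minkowski's inequality controls the cost. -/
lemma pModulus_le_midpoint (hp : 1 < p) {f g : X → ℝ≥0∞} (hf : Measurable f) (hg : Measurable g)
    (hfS : pModulus p μ {ν ∈ S | ¬ 1 ≤ ∫⁻ x, f x ∂ν} = 0)
    (hgS : pModulus p μ {ν ∈ S | ¬ 1 ≤ ∫⁻ x, g x ∂ν} = 0) :
    pModulus p μ S ≤ ∫⁻ x, ((f x + g x) / 2) ^ p ∂μ := by
  have hp0 : 0 < p := by linarith
  have hpi : 0 < 1 / p := by positivity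
  have hm : Measurable fun x => (f x + g x) / 2 := (hf.add hg).div_const 2
  have key : ∀ ε : ℝ≥0, 0 < ε → pModulus p μ S ^ (1 / p) ≤
      (∫⁻ x, ((f x + g x) / 2) ^ p ∂μ) ^ (1 / p) + (ε + ε : ℝ≥0) := by
    intro ε hε
    have hε' : (0 : ℝ≥0∞) < (ε : ℝ≥0∞) ^ p :=
      ENNReal.rpow_pos (by exact_mod_cast hε) ENNReal.coe_ne_top
    obtain ⟨u, hu, hu1, hu2⟩ := exists_admissible_lt (hfS.trans_lt hε')
    obtain ⟨v, hv, hv1, hv2⟩ := exists_admissible_lt (hgS.trans_lt hε')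
    have hroot : ∀ w : X → ℝ≥0∞, ∫⁻ x, w x ^ p ∂μ < (ε : ℝ≥0∞) ^ p →
        (∫⁻ x, w x ^ p ∂μ) ^ (1 / p) ≤ ε := by
      intro w hw
      refine (ENNReal.rpow_le_rpow hw.le hpi.le).trans_eq ?_
      rw [← ENNReal.rpow_mul, mul_one_div_cancel hp0.ne', ENNReal.rpow_one]
    have hadm : pModulus p μ S ≤
        ∫⁻ x, ((fun x => (f x + g x) / 2) + (u + v)) x ^ p ∂μ := by
      refine pModulus_le (hm.add (hu.add hv)) fun ν hν => ?_
      by_cases h1 : 1 ≤ ∫⁻ x, f x ∂ν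
      · by_cases h2 : 1 ≤ ∫⁻ x, g x ∂ν
        · calc (1 : ℝ≥0∞) = (1 + 1) / 2 := by
                rw [one_add_one_eq_two, ENNReal.div_self two_ne_zero ENNReal.ofNat_ne_top]
            _ ≤ (∫⁻ x, f x ∂ν + ∫⁻ x, g x ∂ν) / 2 := by gcongr
            _ = ∫⁻ x, (f x + g x) / 2 ∂ν := by
                simp only [div_eq_mul_inv]
                rw [lintegral_mul_const _ (by fun_prop), lintegral_add_left hf]
            _ ≤ _ := lintegral_mono fun x => le_self_add
        · exact (hv1 ν ⟨hν, h2⟩).trans (lintegral_mono fun x =>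
            (le_add_self : v x ≤ u x + v x).trans le_add_self)
      · exact (hu1 ν ⟨hν, h1⟩).trans (lintegral_mono fun x =>
          (le_self_add : u x ≤ u x + v x).trans le_add_self)
    calc pModulus p μ S ^ (1 / p)
        ≤ (∫⁻ x, ((fun x => (f x + g x) / 2) + (u + v)) x ^ p ∂μ) ^ (1 / p) :=
          ENNReal.rpow_le_rpow hadm hpi.le
      _ ≤ (∫⁻ x, ((f x + g x) / 2) ^ p ∂μ) ^ (1 / p) +
            (∫⁻ x, (u + v) x ^ p ∂μ) ^ (1 / p) :=
          ENNReal.lintegral_Lp_add_le hm.aemeasurable (hu.add hv).aemeasurable hp.le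
      _ ≤ (∫⁻ x, ((f x + g x) / 2) ^ p ∂μ) ^ (1 / p) +
            ((∫⁻ x, u x ^ p ∂μ) ^ (1 / p) + (∫⁻ x, v x ^ p ∂μ) ^ (1 / p)) := by
          gcongr
          exact ENNReal.lintegral_Lp_add_le hu.aemeasurable hv.aemeasurable hp.le
      _ ≤ _ := by
          push_cast
          gcongr
          · exact hroot u hu2
          · exact hroot v hv2
  rw [← ENNReal.rpow_le_rpow_iff hpi]
  refine ENNReal.le_of_forall_pos_le_add fun ε hε _ => ?_
  simpa using key (ε / 2) (by positivity)

lemma pModulus_le_of_weaklyAdmissible (hp : 1 < p) {f : X → ℝ≥0∞} (hf : Measurable f)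
    (hfS : pModulus p μ {ν ∈ S | ¬ 1 ≤ ∫⁻ x, f x ∂ν} = 0) :
    pModulus p μ S ≤ ∫⁻ x, f x ^ p ∂μ := by
  have h := pModulus_le_midpoint hp hf hf hfS hfS
  have e : ∀ a : ℝ≥0∞, (a + a) / 2 = a := fun a => by
    rw [ENNReal.add_div, ENNReal.add_halves]
  simpa only [e] using h

/-- Weakly admissible functions whose `p`-energy is close to the modulus are close in `L^p`. -/
lemma exists_almost_minimizer_close (hp : 1 < p) (hfin : pModulus p μ S < ⊤)
    {ε : ℝ≥0∞} (hε : ε ≠ 0) :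
    ∃ η : ℝ≥0∞, 0 < η ∧ ∀ f g : X → ℝ≥0∞, Measurable f → Measurable g →
      pModulus p μ {ν ∈ S | ¬ 1 ≤ ∫⁻ x, f x ∂ν} = 0 →
      pModulus p μ {ν ∈ S | ¬ 1 ≤ ∫⁻ x, g x ∂ν} = 0 →
      ∫⁻ x, f x ^ p ∂μ ≤ pModulus p μ S + η →
      ∫⁻ x, g x ^ p ∂μ ≤ pModulus p μ S + η →
      ∫⁻ x, (f x - g x) ^ p ∂μ ≤ ε := by
  set m := pModulus p μ S with hm
  obtain ⟨ε', hε'0, hε'⟩ := ENNReal.lt_iff_exists_nnreal_btwn.1 (pos_iff_ne_zero.2 hε)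
  have hε'0 : 0 < ε' := by exact_mod_cast hε'0
  lift m to ℝ≥0 using hfin.ne with M
  -- `δ` and `η` are chosen so that `2 δ (M + η) + C η ≤ ε'`, using `η ≤ 1`.
  let δ : ℝ≥0 := ε' / (4 * (M + 1))
  have hδ : 0 < δ := by positivity
  obtain ⟨C, hC⟩ := exists_convexity_bound hp hδ
  let η : ℝ≥0 := min 1 (ε' / (2 * (C + 1)))
  have hη : 0 < η := lt_min one_pos (by positivity)
  refine ⟨η, by exact_mod_cast hη, fun f g hf hg hfS hgS hfe hge => ?_⟩
  have hmid := pModulus_le_midpoint hp hf hg hfS hgS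
  rw [← hm] at hmid
  have h1 := lintegral_mono (μ := μ) fun x => hC (f x) (g x)
  have mf : Measurable fun x => f x ^ p := hf.pow_const p
  have mg : Measurable fun x => g x ^ p := hg.pow_const p
  have mm : Measurable fun x => ((f x + g x) / 2) ^ p := ((hf.add hg).div_const 2).pow_const p
  have ms : Measurable fun x => (f x - g x) ^ p := (hf.sub hg).pow_const p
  have mfg : Measurable fun x => f x ^ p + g x ^ p := mf.add mg
  have e1 : ∫⁻ x, ((f x - g x) ^ p + C * ((f x + g x) / 2) ^ p) ∂μ =
      ∫⁻ x, (f x - g x) ^ p ∂μ + C * ∫⁻ x, ((f x + g x) / 2) ^ p ∂μ := by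
    rw [lintegral_add_left ms, lintegral_const_mul _ mm]
  have e2 : ∫⁻ x, (δ * (f x ^ p + g x ^ p) + C * ((f x ^ p + g x ^ p) / 2)) ∂μ =
      δ * (∫⁻ x, f x ^ p ∂μ + ∫⁻ x, g x ^ p ∂μ) +
        C * ((∫⁻ x, f x ^ p ∂μ + ∫⁻ x, g x ^ p ∂μ) / 2) := by
    rw [lintegral_add_left (mfg.const_mul _), lintegral_const_mul _ mfg,
      lintegral_const_mul _ (mfg.div_const 2)]
    simp only [div_eq_mul_inv]
    rw [lintegral_mul_const _ mfg, lintegral_add_left mf]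
  rw [e1, e2] at h1
  have h2 : ∫⁻ x, (f x - g x) ^ p ∂μ + C * M ≤ δ * (2 * (M + η)) + C * (M + η) := by
    calc _ ≤ ∫⁻ x, (f x - g x) ^ p ∂μ + C * ∫⁻ x, ((f x + g x) / 2) ^ p ∂μ := by gcongr
      _ ≤ _ := h1
      _ ≤ δ * ((M + η) + (M + η)) + C * (((M + η) + (M + η)) / 2) := by gcongr
      _ = _ := by
        rw [← two_mul, mul_div_assoc, ENNReal.mul_div_cancel two_ne_zero ENNReal.ofNat_ne_top]
  have h3 : ∫⁻ x, (f x - g x) ^ p ∂μ ≤ δ * (2 * (M + η)) + C * η := by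
    refine (ENNReal.add_le_add_iff_right (a := (C : ℝ≥0∞) * M)
      (by finiteness)).1 (h2.trans_eq (by ring))
  refine (h3.trans ?_).trans hε'.le
  have h4 : δ * (2 * (M + η)) + C * η ≤ ε' := by
    have a1 : δ * (2 * (M + η)) ≤ ε' / 2 := by
      calc δ * (2 * (M + η)) ≤ δ * (2 * (M + 1)) := by gcongr; exact min_le_left _ _
        _ = ε' / 2 := by simp only [δ]; field_simp; norm_num
    have a2 : C * η ≤ ε' / 2 := by
      calc C * η ≤ (C + 1) * (ε' / (2 * (C + 1))) := by
            gcongr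
            · exact le_self_add
            · exact min_le_right _ _
        _ = ε' / 2 := by field_simp
    exact (add_le_add a1 a2).trans_eq (add_halves ε')
  exact_mod_cast h4

lemma minimizer_ae_le (hp : 1 < p) (hfin : pModulus p μ S < ⊤) {f g : X → ℝ≥0∞}
    (hf : Measurable f) (hg : Measurable g)
    (hfS : pModulus p μ {ν ∈ S | ¬ 1 ≤ ∫⁻ x, f x ∂ν} = 0)
    (hgS : pModulus p μ {ν ∈ S | ¬ 1 ≤ ∫⁻ x, g x ∂ν} = 0)
    (hfe : ∫⁻ x, f x ^ p ∂μ = pModulus p μ S) (hge : ∫⁻ x, g x ^ p ∂μ = pModulus p μ S) :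
    f ≤ᵐ[μ] g := by
  have hp0 : 0 < p := by linarith
  have h0 : ∫⁻ x, (f x - g x) ^ p ∂μ = 0 := by
    by_contra hne
    obtain ⟨ε, hε0, hε⟩ := exists_between (pos_iff_ne_zero.2 hne)
    obtain ⟨η, _, h⟩ := exists_almost_minimizer_close (S := S) hp hfin hε0.ne'
    exact absurd (h f g hf hg hfS hgS (hfe.trans_le le_self_add) (hge.trans_le le_self_add))
      (not_le.2 hε)
  rw [lintegral_eq_zero_iff (by fun_prop)] at h0
  filter_upwards [h0] with x hx
  simpa [ENNReal.rpow_eq_zero_iff_of_pos hp0, tsub_eq_zero_iff_le] using hx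

lemma exists_minimizer (hp : 1 < p) (hfin : pModulus p μ S < ⊤) :
    ∃ f : X → ℝ≥0∞, Measurable f ∧
      pModulus p μ {ν ∈ S | ¬ 1 ≤ ∫⁻ x, f x ∂ν} = 0 ∧
      ∫⁻ x, f x ^ p ∂μ = pModulus p μ S := by
  have hp0 : 0 < p := by linarith
  let q : ℕ → ℝ≥0∞ := fun k => 2⁻¹ ^ k
  have hq0 : ∀ k, q k ≠ 0 := fun k => pow_ne_zero _ (by simp)
  have hqt : ∀ k, q k ≠ ⊤ := fun k => ENNReal.pow_ne_top (by simp)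
  have hqs : ∑' k, q k = 2 := by
    simp [q, ENNReal.tsum_geometric, ENNReal.one_sub_inv_two]
  have hεpos : ∀ k, q k ^ p * q k ≠ 0 := fun k =>
    mul_ne_zero (ENNReal.rpow_pos (pos_iff_ne_zero.2 (hq0 k)) (hqt k)).ne' (hq0 k)
  choose η hη0 hη using fun k => exists_almost_minimizer_close (S := S) hp hfin (hεpos k)
  -- `f k` and `f (k + 1)` both lie within `η k` of the modulus.
  let θ : ℕ → ℝ≥0∞ := fun k => min (q k) (min (η k) (η (k - 1)))
  have hθ0 : ∀ k, θ k ≠ 0 := fun k =>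
    (lt_min (pos_iff_ne_zero.2 (hq0 k)) (lt_min (hη0 _) (hη0 _))).ne'
  choose f hf hfS hfe using fun k =>
    exists_admissible_lt (ENNReal.lt_add_right hfin.ne (hθ0 k))
  have hweak : ∀ k, pModulus p μ {ν ∈ S | ¬ 1 ≤ ∫⁻ x, f k x ∂ν} = 0 := by
    intro k
    convert pModulus_empty (X := X) (μ := μ) hp
    ext ν
    simp only [Set.mem_ofPred_eq, Set.mem_empty_iff_false, iff_false, not_and, not_not]
    exact hfS k ν
  have hclose : ∀ k, ∫⁻ x, (f k x - f (k + 1) x) ^ p ∂μ ≤ q k ^ p * q k := by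
    intro k
    refine hη k _ _ (hf k) (hf (k + 1)) (hweak k) (hweak (k + 1)) ((hfe k).le.trans ?_)
      ((hfe (k + 1)).le.trans ?_)
    · gcongr; exact (min_le_right _ _).trans (min_le_left _ _)
    · gcongr; exact (min_le_right _ _).trans (min_le_right _ _)
  -- `H` dominates every rescaled truncated difference.
  let H : X → ℝ≥0∞ := fun x => (∑' k, ((q k)⁻¹ * (f k x - f (k + 1) x)) ^ p) ^ (1 / p)
  have mt : ∀ k, Measurable fun x => ((q k)⁻¹ * (f k x - f (k + 1) x)) ^ p := fun k =>
    (((hf k).sub (hf (k + 1))).const_mul _).pow_const p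
  have hHm : Measurable H := (Measurable.tsum mt).pow_const _
  have hHfin : ∫⁻ x, H x ^ p ∂μ ≠ ⊤ := by
    have e : ∀ x, H x ^ p = ∑' k, ((q k)⁻¹ * (f k x - f (k + 1) x)) ^ p := fun x => by
      simp only [H]
      rw [← ENNReal.rpow_mul, one_div_mul_cancel hp0.ne', ENNReal.rpow_one]
    simp only [e]
    rw [lintegral_tsum fun k => (mt k).aemeasurable]
    refine ne_top_of_le_ne_top (b := 2) ENNReal.ofNat_ne_top ?_
    rw [← hqs]
    refine ENNReal.tsum_le_tsum fun k => ?_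
    simp only [ENNReal.mul_rpow_of_nonneg _ _ hp0.le]
    rw [lintegral_const_mul _ (by fun_prop)]
    calc (q k)⁻¹ ^ p * ∫⁻ x, (f k x - f (k + 1) x) ^ p ∂μ
        ≤ (q k)⁻¹ ^ p * (q k ^ p * q k) := by gcongr; exact hclose k
      _ = q k := by
        rw [← mul_assoc, ← ENNReal.mul_rpow_of_nonneg _ _ hp0.le,
          ENNReal.inv_mul_cancel (hq0 k) (hqt k), ENNReal.one_rpow, one_mul]
  have hstep : ∀ k x, f k x ≤ f (k + 1) x + q k * H x := by
    intro k x
    have h1 : (q k)⁻¹ * (f k x - f (k + 1) x) ≤ H x := by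
      simp only [H, one_div]
      rw [ENNReal.le_rpow_inv_iff hp0]
      exact ENNReal.le_tsum k
    have h2 : f k x - f (k + 1) x ≤ q k * H x := by
      calc f k x - f (k + 1) x = q k * ((q k)⁻¹ * (f k x - f (k + 1) x)) := by
            rw [← mul_assoc, ENNReal.mul_inv_cancel (hq0 k) (hqt k), one_mul]
        _ ≤ _ := by gcongr
    rw [add_comm]
    exact tsub_le_iff_right.1 h2
  have htel : ∀ k n x, f k x ≤ f (k + n) x + (∑ j ∈ Finset.range n, q (k + j)) * H x := by
    intro k n x
    induction n with
    | zero => simp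
    | succ n ih =>
      refine ih.trans ?_
      rw [Finset.sum_range_succ, add_mul, add_comm _ (q (k + n) * H x), ← add_assoc]
      gcongr
      exact hstep (k + n) x
  have htel' : ∀ k n x, k ≤ n → f k x ≤ f n x + 2 * q k * H x := by
    intro k n x hkn
    obtain ⟨n, rfl⟩ := Nat.exists_eq_add_of_le hkn
    refine (htel k n x).trans ?_
    gcongr
    calc ∑ j ∈ Finset.range n, q (k + j) = q k * ∑ j ∈ Finset.range n, q j := by
          simp only [q, pow_add, Finset.mul_sum]
      _ ≤ q k * 2 := by gcongr; rw [← hqs]; exact ENNReal.sum_le_tsum _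
      _ = 2 * q k := mul_comm _ _
  let F : X → ℝ≥0∞ := fun x => liminf (fun n => f n x) atTop
  have hFm : Measurable F := Measurable.liminf hf
  have hfF : ∀ k x, f k x ≤ F x + 2 * q k * H x := by
    intro k x
    rw [← tsub_le_iff_right]
    refine le_liminf_of_le (by isBoundedDefault) ?_
    filter_upwards [eventually_ge_atTop k] with n hn
    exact tsub_le_iff_right.2 (htel' k n x hn)
  have hq_lim : Tendsto q atTop (𝓝 0) :=
    ENNReal.tendsto_pow_atTop_nhds_zero_of_lt_one (by simp)
  have hFS : pModulus p μ {ν ∈ S | ¬ 1 ≤ ∫⁻ x, F x ∂ν} = 0 := by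
    refine pModulus_eq_zero_of_lintegral_eq_top hp hHm hHfin fun ν hν => ?_
    by_contra hne
    refine hν.2 ?_
    have hk : ∀ k, 1 ≤ ∫⁻ x, F x ∂ν + 2 * q k * ∫⁻ x, H x ∂ν := fun k => by
      calc 1 ≤ ∫⁻ x, f k x ∂ν := hfS k ν hν.1
        _ ≤ ∫⁻ x, (F x + 2 * q k * H x) ∂ν := lintegral_mono (hfF k)
        _ = _ := by rw [lintegral_add_left hFm, lintegral_const_mul _ hHm]
    have hl : Tendsto (fun k => ∫⁻ x, F x ∂ν + 2 * q k * ∫⁻ x, H x ∂ν) atTop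
        (𝓝 (∫⁻ x, F x ∂ν)) := by
      have h1 : Tendsto (fun k => 2 * q k) atTop (𝓝 0) := by
        simpa using ENNReal.Tendsto.const_mul hq_lim (Or.inr ENNReal.ofNat_ne_top)
      have h2 := ENNReal.Tendsto.mul_const h1 (Or.inr hne)
      simpa using tendsto_const_nhds.add h2
    exact ge_of_tendsto' hl hk
  refine ⟨F, hFm, hFS, le_antisymm ?_ (pModulus_le_of_weaklyAdmissible hp hFm hFS)⟩
  have hlimE : Tendsto (fun k => pModulus p μ S + q k) atTop (𝓝 (pModulus p μ S)) := by
    simpa using tendsto_const_nhds.add hq_lim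
  calc ∫⁻ x, F x ^ p ∂μ = ∫⁻ x, liminf (fun n => f n x ^ p) atTop ∂μ := by
        refine lintegral_congr fun x => ?_
        exact (ENNReal.monotone_rpow_of_nonneg hp0.le).map_liminf_of_continuousAt
          (fun n => f n x) ENNReal.continuous_rpow_const.continuousAt
    _ ≤ liminf (fun n => ∫⁻ x, f n x ^ p ∂μ) atTop :=
        lintegral_liminf_le fun n => (hf n).pow_const p
    _ ≤ liminf (fun n => pModulus p μ S + q n) atTop :=
        liminf_le_liminf (Eventually.of_forall fun n =>
          (hfe n).le.trans (by gcongr; exact min_le_left _ _))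
    _ = pModulus p μ S := hlimE.liminf_eq

end

/-- For `p ∈ (1,∞)` and `Mod_p S < ∞`, the infimum defining `Mod_p S` over `p`-weakly
admissible functions is attained, and the minimizer is unique up to `μ`-a.e. equality. -/
theorem pModulus_exists_unique_minimizer {X : Type*} [MeasurableSpace X] (p : ℝ) (hp : 1 < p)
    (μ : MeasureTheory.Measure X) (S : Set (MeasureTheory.Measure X))
    (hfin : pModulus p μ S < ⊤) :
    ∃ f : X → ℝ≥0∞, Measurable f ∧
      pModulus p μ {ν ∈ S | ¬ 1 ≤ ∫⁻ x, f x ∂ν} = 0 ∧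
      (∫⁻ x, f x ^ p ∂μ) = pModulus p μ S ∧
      ∀ g : X → ℝ≥0∞, Measurable g →
        pModulus p μ {ν ∈ S | ¬ 1 ≤ ∫⁻ x, g x ∂ν} = 0 →
        (∫⁻ x, g x ^ p ∂μ) = pModulus p μ S →
        f =ᵐ[μ] g := by
  obtain ⟨f, hf, hfS, hfe⟩ := exists_minimizer hp hfin
  refine ⟨f, hf, hfS, hfe, fun g hg hgS hge => ?_⟩
  filter_upwards [minimizer_ae_le hp hfin hf hg hfS hgS hfe hge,
    minimizer_ae_le hp hfin hg hf hgS hfS hge hfe] with x h1 h2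
  exact le_antisymm h1 h2
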